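/- For every real V>10⁶, one has f(V)<0, where f(V)=−(3/2)·V·ω̃₊(1/V)³−1. -/

import Mathlib

/-- z₀(G) = 32G³+27G²+3√3·√(27G⁴+64G⁵). -/
noncomputable def z₀ (G : ℝ) : ℝ :=
  32 * G ^ 3 + 27 * G ^ 2 + 3 * Real.sqrt 3 * Real.sqrt (27 * G ^ 4 + 64 * G ^ 5)

/-- z₁(G) = 2^{5/3}·G·z₀(G)^{−1/3}. -/
noncomputable def z₁ (G : ℝ) : ℝ :=
  (2 : ℝ) ^ ((5 : ℝ) / 3) * G * (z₀ G) ^ (-(1 : ℝ) / 3)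

/-- y₀(G) = (2G/3)·(1+z₁(G)+z₁(G)⁻¹), a root of the resolvent cubic. -/
noncomputable def y₀ (G : ℝ) : ℝ :=
  (2 * G / 3) * (1 + z₁ G + (z₁ G)⁻¹)

/-- The quartic P_G(k)=k⁴−2Gk²+2Gk+G² determining the critical frequencies. -/
noncomputable def P (G k : ℝ) : ℝ :=
  k ^ 4 - 2 * G * k ^ 2 + 2 * G * k + G ^ 2

/-- The discriminant D(G)=−2y₀(G)+4G+4G/√(2y₀(G)). -/
noncomputable def Dd (G : ℝ) : ℝ :=
  -2 * y₀ G + 4 * G + 4 * G / Real.sqrt (2 * y₀ G)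

/-- The critical frequency closer to the origin, ω̃₊(G)=(−√(2y₀(G))+√(D(G)))/2. -/
noncomputable def ωp (G : ℝ) : ℝ :=
  (-Real.sqrt (2 * y₀ G) + Real.sqrt (Dd G)) / 2

/-- The critical frequency farther from the origin, ω̃₋(G)=(−√(2y₀(G))−√(D(G)))/2. -/
noncomputable def ωm (G : ℝ) : ℝ :=
  (-Real.sqrt (2 * y₀ G) - Real.sqrt (Dd G)) / 2

/-- The focusing-condition function f(V)=−(3/2)·V·ω̃₊(1/V)³−1. -/
noncomputable def fV (V : ℝ) : ℝ :=
  -(3 / 2) * V * (ωp (1 / V)) ^ 3 - 1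


lemma z₀_bounds (G : ℝ) (hG : 0 < G) (hG' : G < 1 / 10 ^ 6) :
    27 * G ^ 2 ≤ z₀ G ∧ z₀ G ≤ 64 * G ^ 2 := by
  unfold z₀
  have h3 : (0 : ℝ) ≤ √3 * √(27 * G ^ 4 + 64 * G ^ 5) := by positivity
  have h4 : √3 * √(27 * G ^ 4 + 64 * G ^ 5) ≤ 10 * G ^ 2 := by
    rw [← Real.sqrt_mul (by norm_num)]
    apply Real.sqrt_le_iff.2
    refine ⟨by positivity, ?_⟩
    have : G ^ 5 ≤ G ^ 4 * (1 / 10 ^ 6) := by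
      rw [pow_succ]
      exact mul_le_mul_of_nonneg_left hG'.le (by positivity)
    have h5 : 0 < G ^ 4 := by positivity
    norm_num at this ⊢
    nlinarith
  have h6 : G ^ 3 ≤ G ^ 2 * (1 / 10 ^ 6) := by
    rw [pow_succ]
    exact mul_le_mul_of_nonneg_left hG'.le (by positivity)
  have h7 : 0 < G ^ 2 := by positivity
  have h8 : 0 < G ^ 3 := by positivity
  norm_num at h6
  constructor <;> nlinarith

lemma z₁_cube (G : ℝ) (h : 0 < z₀ G) : z₁ G ^ 3 * z₀ G = 32 * G ^ 3 := by
  unfold z₁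
  have h1 : ((2 : ℝ) ^ ((5 : ℝ) / 3)) ^ 3 = 32 := by
    rw [← Real.rpow_natCast, ← Real.rpow_mul (by norm_num)]
    norm_num
  have h2 : ((z₀ G) ^ (-(1 : ℝ) / 3)) ^ 3 = (z₀ G)⁻¹ := by
    rw [← Real.rpow_natCast, ← Real.rpow_mul h.le, ← Real.rpow_neg_one]
    norm_num
  rw [mul_pow, mul_pow, h1, h2]
  field_simp

lemma y₀_bounds (G : ℝ) (hG : 0 < G) (hG' : G < 1 / 10 ^ 6) :
    0 < y₀ G ∧ y₀ G ^ 3 ≤ G ^ 2 := by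
  obtain ⟨hl, hu⟩ := z₀_bounds G hG hG'
  have h7 : 0 < G ^ 2 := by positivity
  have hz0 : 0 < z₀ G := by linarith
  have hz : 0 < z₁ G := by unfold z₁; positivity
  have hc := z₁_cube G hz0
  have hz3 : 0 < z₁ G ^ 3 := by positivity
  have hlow : G ≤ 2 * z₁ G ^ 3 := by
    have : 32 * G ^ 3 ≤ z₁ G ^ 3 * (64 * G ^ 2) := by
      rw [← hc]; exact mul_le_mul_of_nonneg_left hu hz3.le
    have h9 : G ^ 2 * G ≤ G ^ 2 * (2 * z₁ G ^ 3) := by nlinarith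
    exact le_of_mul_le_mul_left h9 h7
  have hup : z₁ G ^ 3 * 27 ≤ 32 * G := by
    have : z₁ G ^ 3 * (27 * G ^ 2) ≤ 32 * G ^ 3 := by
      rw [← hc]; exact mul_le_mul_of_nonneg_left hl hz3.le
    have h9 : G ^ 2 * (z₁ G ^ 3 * 27) ≤ G ^ 2 * (32 * G) := by nlinarith
    exact le_of_mul_le_mul_left h9 h7
  have hz1 : z₁ G ≤ 1 / 50 := by
    refine le_of_pow_le_pow_left₀ (n := 3) (by norm_num) (by norm_num) ?_
    norm_num at *
    linarith
  have hy : y₀ G * z₁ G = (2 * G / 3) * (z₁ G + z₁ G ^ 2 + 1) := by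
    unfold y₀; field_simp
  have hy0 : 0 < y₀ G := by unfold y₀; positivity
  refine ⟨hy0, ?_⟩
  have hyz : y₀ G * z₁ G ≤ 7 / 10 * G := by
    rw [hy]
    have : z₁ G + z₁ G ^ 2 + 1 ≤ 21 / 20 := by nlinarith
    nlinarith
  have hy3 : (y₀ G * z₁ G) ^ 3 ≤ (7 / 10 * G) ^ 3 :=
    pow_le_pow_left₀ (by positivity) hyz 3
  have hy03 : 0 < y₀ G ^ 3 := by positivity
  have h1 : y₀ G ^ 3 * G ≤ y₀ G ^ 3 * (2 * z₁ G ^ 3) :=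
    mul_le_mul_of_nonneg_left hlow hy03.le
  have h8 : 0 < G ^ 3 := by positivity
  have h2 : G * y₀ G ^ 3 ≤ G * G ^ 2 := by nlinarith
  exact le_of_mul_le_mul_left h2 hG

/-- For V>10⁶ the focusing-condition function is negative: f(V)<0. -/
theorem focusing_fails_large_V (V : ℝ) (hV : (10 : ℝ) ^ 6 < V) : fV V < 0 := by
  have hV0 : 0 < V := lt_trans (by norm_num) hV
  unfold fV
  obtain ⟨G, hGdef⟩ : ∃ G, G = 1 / V := ⟨_, rfl⟩
  have hVG : V * G = 1 := by rw [hGdef]; field_simp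
  rw [← hGdef]
  have hG : 0 < G := by rw [hGdef]; positivity
  have hG' : G < 1 / 10 ^ 6 := by
    rw [hGdef]; exact one_div_lt_one_div_of_lt (by norm_num) hV
  obtain ⟨hy, hy3⟩ := y₀_bounds G hG hG'
  obtain ⟨s, hs⟩ : ∃ s, s = √(2 * y₀ G) := ⟨_, rfl⟩
  have hs0 : 0 ≤ s := hs ▸ Real.sqrt_nonneg _
  have hs2 : s ^ 2 = 2 * y₀ G := by rw [hs]; exact Real.sq_sqrt (by positivity)
  have hs3 : s ^ 3 ≤ 3 * G := by
    refine le_of_pow_le_pow_left₀ (n := 2) (by norm_num) (by positivity) ?_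
    have : (s ^ 3) ^ 2 = 8 * y₀ G ^ 3 := by
      rw [← pow_mul, mul_comm 3 2, pow_mul, hs2]; ring
    nlinarith
  have hw : -ωp G ≤ s / 2 := by
    unfold ωp
    rw [← hs]
    have := Real.sqrt_nonneg (Dd G)
    linarith
  have hw3 : (-ωp G) ^ 3 ≤ (s / 2) ^ 3 := (Odd.strictMono_pow (by decide)).monotone hw
  have hfin : -(ωp G) ^ 3 ≤ 3 / 8 * G := by nlinarith
  have := mul_le_mul_of_nonneg_left hfin hV0.le
  nlinarith
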